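/- For every γ > 0 there exists a constant C > 0, independent of the configuration, such that: for every axisymmetric configuration −1 < z₁ < ⋯ < z_n < 1 of mass m = 0 that is a critical point of E_γ, and every k ∈ {1, …, n−1}, one has z_{k+1} − z_k ≥ C·max{|z_k|, |z_{k+1}|}/γ. -/

import Mathlib

/-!
Write `a = z k < b = z (k + 1)` and `κ(x) = x / √(1 - x²)`. The curvature terms of consecutive
interfaces carry opposite signs, so subtracting the two Euler–Lagrange equations gives
`|κ(a) + κ(b)| = 4γ |v(b) - v(a)|`.

Since `u - m` has mean zero, `ξ` vanishes at both poles; it is `(1 + |m|)`-Lipschitz, so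
`|ξ(s)| ≤ (1 + |m|) (1 - |s|)`, which absorbs the singularity of `1 / (1 - s²)` and makes `v`
`(1 + |m|)`-Lipschitz, with `|m| ≤ 1`. If `a` and `b` have the same sign, then
`max |a| |b| ≤ |κ(a) + κ(b)| ≤ 8γ (b - a)`. If they have opposite signs the curvatures may cancel,
but then `b - a = |a| + |b|`.
-/

/-- The axisymmetric step pattern with `n` interfaces located at `z 1 < ⋯ < z n`
(with `z 0 = -1`, `z (n+1) = 1`): `u(t) = (-1)^(k+1)` for `t ∈ [z k, z (k+1))`,
so `u = -1` on `[-1, z 1)`. -/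
noncomputable def pattern (n : ℕ) (z : ℕ → ℝ) (t : ℝ) : ℝ :=
  (-1 : ℝ) ^ (((Finset.Icc 1 n).filter (fun i => z i ≤ t)).card + 1)

/-- The mass `m = (1/2)∫_{-1}^1 u(t) dt`. -/
noncomputable def mass (n : ℕ) (z : ℕ → ℝ) : ℝ :=
  (1 / 2) * ∫ t in (-1 : ℝ)..1, pattern n z t

/-- `ξ(t) = ∫_{-1}^t (u(s) - m) ds`. -/
noncomputable def xi (n : ℕ) (z : ℕ → ℝ) (t : ℝ) : ℝ :=
  ∫ s in (-1 : ℝ)..t, (pattern n z s - mass n z)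

/-- The potential `v(t) = ∫_0^t ξ(s)/(1-s²) ds`. -/
noncomputable def pot (n : ℕ) (z : ℕ → ℝ) (t : ℝ) : ℝ :=
  ∫ s in (0 : ℝ)..t, xi n z s / (1 - s ^ 2)

/-- `z` is an axisymmetric configuration with `n` interfaces:
`-1 = z 0 < z 1 < ⋯ < z n < z (n+1) = 1`. -/
def IsConfig (n : ℕ) (z : ℕ → ℝ) : Prop :=
  z 0 = -1 ∧ z (n + 1) = 1 ∧ ∀ i j, i < j → j ≤ n + 1 → z i < z j

/-- The configuration is a critical point of `E_γ`: the Euler–Lagrange equation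
`κ_g(z_k) + 4γ v(z_k) = λ` holds at every interface `z 1, …, z n`, with a single
constant `λ`; here `κ_g(z_k) = (-1)^(k+1) z_k / √(1 - z_k²)` is the signed geodesic
curvature of the interface circle with respect to the outer normal of `{u = 1}`. -/
def IsCritical (γ : ℝ) (n : ℕ) (z : ℕ → ℝ) : Prop :=
  ∃ lam : ℝ, ∀ k, 1 ≤ k → k ≤ n →
    (-1 : ℝ) ^ (k + 1) * z k / Real.sqrt (1 - z k ^ 2) + 4 * γ * pot n z (z k) = lam

open MeasureTheory Set

lemma max_abs_le_abs_add {R : Type*} [Ring R] [LinearOrder R] [IsStrictOrderedRing R] {x y : R}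
    (hxy : 0 ≤ x * y) : max |x| |y| ≤ |x + y| := by
  rw [abs_add_eq_add_abs_iff x y |>.2 (mul_nonneg_iff.1 hxy)]
  exact max_le_add_of_nonneg (abs_nonneg x) (abs_nonneg y)

lemma one_sub_sq_pos {x : ℝ} (hx : x ∈ Ioo (-1 : ℝ) 1) : 0 < 1 - x ^ 2 :=
  sub_pos.2 <| (sq_lt_one_iff_abs_lt_one x).2 <| abs_lt.2 hx

lemma norm_integral_le_mul_min_of_integral_eq_zero {E : Type*} [NormedAddCommGroup E]
    [NormedSpace ℝ E] {f : ℝ → E} {a b s M : ℝ} (hf : IntervalIntegrable f volume a b)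
    (hM : ∀ t ∈ Ioc a b, ‖f t‖ ≤ M) (hzero : ∫ t in a..b, f t = 0) (hs : s ∈ Icc a b) :
    ‖∫ t in a..s, f t‖ ≤ M * min (s - a) (b - s) := by
  obtain ⟨has, hsb⟩ := hs
  have hleft : ‖∫ t in a..s, f t‖ ≤ M * (s - a) := by
    rw [← abs_of_nonneg (sub_nonneg.2 has)]
    refine intervalIntegral.norm_integral_le_of_norm_le_const fun t ht => hM t ?_
    rw [uIoc_of_le has] at ht
    exact Ioc_subset_Ioc_right hsb ht
  have hright : ‖∫ t in s..b, f t‖ ≤ M * (b - s) := by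
    rw [← abs_of_nonneg (sub_nonneg.2 hsb)]
    refine intervalIntegral.norm_integral_le_of_norm_le_const fun t ht => hM t ?_
    rw [uIoc_of_le hsb] at ht
    exact Ioc_subset_Ioc_left has ht
  have hadd : (∫ t in a..s, f t) + ∫ t in s..b, f t = 0 := by
    have hmem : s ∈ uIcc a b := mem_uIcc_of_le has hsb
    rw [intervalIntegral.integral_add_adjacent_intervals
      (hf.mono_set (uIcc_subset_uIcc_left hmem)) (hf.mono_set (uIcc_subset_uIcc_right hmem)), hzero]
  rw [eq_neg_of_add_eq_zero_right hadd, norm_neg] at hright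
  rcases min_choice (s - a) (b - s) with h | h <;> rwa [h]

/-- The geodesic curvature `κ(x) = x / √(1 - x²)` of the circle of latitude at height
`x ∈ (-1, 1)` of the unit sphere, positive on the northern hemisphere. The signed
curvature in `IsCritical` at the `k`-th interface is `(-1) ^ (k + 1)` times it. -/
noncomputable def latitudeCurvature (x : ℝ) : ℝ :=
  x / √(1 - x ^ 2)

section Curvature

variable {x y : ℝ}

lemma abs_le_abs_latitudeCurvature (hx : x ∈ Ioo (-1 : ℝ) 1) : |x| ≤ |latitudeCurvature x| := by
  rw [latitudeCurvature, abs_div, abs_of_nonneg (Real.sqrt_nonneg _)]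
  refine le_div_self (abs_nonneg x) (Real.sqrt_pos.2 (one_sub_sq_pos hx)) ?_
  exact Real.sqrt_le_one.2 (sub_le_self 1 (sq_nonneg x))

lemma max_abs_le_abs_latitudeCurvature_add (hx : x ∈ Ioo (-1 : ℝ) 1) (hy : y ∈ Ioo (-1 : ℝ) 1)
    (hxy : 0 ≤ x * y) : max |x| |y| ≤ |latitudeCurvature x + latitudeCurvature y| := by
  have hcurv : 0 ≤ latitudeCurvature x * latitudeCurvature y := by
    rw [latitudeCurvature, latitudeCurvature, div_mul_div_comm]
    positivity
  calc max |x| |y|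
      ≤ max |latitudeCurvature x| |latitudeCurvature y| :=
        max_le_max (abs_le_abs_latitudeCurvature hx) (abs_le_abs_latitudeCurvature hy)
    _ ≤ |latitudeCurvature x + latitudeCurvature y| := max_abs_le_abs_add hcurv

end Curvature

section Potential

variable (n : ℕ) (z : ℕ → ℝ)

lemma abs_pattern (t : ℝ) : |pattern n z t| = 1 := by
  simp [pattern, abs_pow]

lemma measurable_pattern : Measurable (pattern n z) := by
  have hcard : Measurable fun t => ((Finset.Icc 1 n).filter fun i => z i ≤ t).card := by
    simp only [Finset.card_filter]
    exact Finset.measurable_sum _ fun i _ =>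
      Measurable.ite measurableSet_Ici measurable_const measurable_const
  exact (measurable_from_nat (f := fun j => (-1 : ℝ) ^ (j + 1))).comp hcard

lemma intervalIntegrable_pattern (a b : ℝ) : IntervalIntegrable (pattern n z) volume a b :=
  (intervalIntegrable_const (c := (1 : ℝ))).mono_fun
    (measurable_pattern n z).aestronglyMeasurable
    (Filter.Eventually.of_forall fun t => by simp [abs_pattern])

lemma intervalIntegrable_pattern_sub_mass (a b : ℝ) :
    IntervalIntegrable (fun t => pattern n z t - mass n z) volume a b :=
  (intervalIntegrable_pattern n z a b).sub intervalIntegrable_const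

lemma abs_mass_le_one : |mass n z| ≤ 1 := by
  have hint : ‖∫ t in (-1 : ℝ)..1, pattern n z t‖ ≤ 1 * |1 - (-1)| :=
    intervalIntegral.norm_integral_le_of_norm_le_const fun t _ => (abs_pattern n z t).le
  rw [mass, abs_mul, ← Real.norm_eq_abs (∫ t in (-1 : ℝ)..1, pattern n z t)]
  norm_num at hint ⊢
  linarith

lemma xi_one : xi n z 1 = 0 := by
  rw [xi, intervalIntegral.integral_sub (intervalIntegrable_pattern n z _ _)
    intervalIntegrable_const, intervalIntegral.integral_const, mass, smul_eq_mul]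
  ring

lemma continuous_xi : Continuous (xi n z) :=
  intervalIntegral.continuous_primitive (intervalIntegrable_pattern_sub_mass n z) _

lemma abs_xi_le {s : ℝ} (hs : s ∈ Icc (-1 : ℝ) 1) :
    |xi n z s| ≤ (1 + |mass n z|) * (1 - |s|) := by
  have hbound : ∀ t ∈ Ioc (-1 : ℝ) 1, ‖pattern n z t - mass n z‖ ≤ 1 + |mass n z| := fun t _ =>
    (norm_sub_le _ _).trans_eq (by simp [abs_pattern])
  have hmin : min (s - -1) (1 - s) = 1 - |s| := by
    rw [abs_eq_max_neg, ← min_sub_sub_left, min_comm, sub_neg_eq_add, sub_neg_eq_add, add_comm]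
  rw [← hmin]
  exact norm_integral_le_mul_min_of_integral_eq_zero
    (intervalIntegrable_pattern_sub_mass n z _ _) hbound (xi_one n z) hs

lemma abs_xi_div_one_sub_sq_le {s : ℝ} (hs : s ∈ Ioo (-1 : ℝ) 1) :
    |xi n z s / (1 - s ^ 2)| ≤ 1 + |mass n z| := by
  have hpos := one_sub_sq_pos hs
  rw [abs_div, abs_of_pos hpos, div_le_iff₀ hpos]
  refine (abs_xi_le n z (Ioo_subset_Icc_self hs)).trans ?_
  gcongr
  rw [← sq_abs, sq]
  exact mul_le_of_le_one_left (abs_nonneg s) (abs_lt.2 hs).le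

lemma intervalIntegrable_xi_div_one_sub_sq {a b : ℝ} (ha : a ∈ Ioo (-1 : ℝ) 1)
    (hb : b ∈ Ioo (-1 : ℝ) 1) :
    IntervalIntegrable (fun s => xi n z s / (1 - s ^ 2)) volume a b := by
  refine ContinuousOn.intervalIntegrable ?_
  refine (continuous_xi n z).continuousOn.div (by fun_prop) fun s hs => ?_
  exact (one_sub_sq_pos (ordConnected_Ioo.uIcc_subset ha hb hs)).ne'

lemma abs_pot_sub_pot_le {a b : ℝ} (ha : a ∈ Ioo (-1 : ℝ) 1) (hb : b ∈ Ioo (-1 : ℝ) 1) :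
    |pot n z b - pot n z a| ≤ (1 + |mass n z|) * |b - a| := by
  have hzero : (0 : ℝ) ∈ Ioo (-1 : ℝ) 1 := by norm_num
  have hsub : pot n z b - pot n z a = ∫ s in a..b, xi n z s / (1 - s ^ 2) :=
    intervalIntegral.integral_interval_sub_left
      (intervalIntegrable_xi_div_one_sub_sq n z hzero hb)
      (intervalIntegrable_xi_div_one_sub_sq n z hzero ha)
  rw [hsub, ← Real.norm_eq_abs (∫ s in a..b, _)]
  refine intervalIntegral.norm_integral_le_of_norm_le_const fun s hs => ?_
  exact abs_xi_div_one_sub_sq_le n z (ordConnected_Ioo.uIcc_subset ha hb (uIoc_subset_uIcc hs))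

end Potential

section CriticalPoints

variable {n k : ℕ} {z : ℕ → ℝ} {γ : ℝ}

lemma IsConfig.lt_succ (hz : IsConfig n z) (hkn : k ≤ n) : z k < z (k + 1) :=
  hz.2.2 k (k + 1) k.lt_succ_self (by omega)

lemma IsConfig.mem_Ioo (hz : IsConfig n z) (hk : 1 ≤ k) (hkn : k ≤ n) :
    z k ∈ Ioo (-1 : ℝ) 1 := by
  obtain ⟨hleft, hright, hmono⟩ := hz
  exact ⟨hleft ▸ hmono 0 k (by omega) (by omega), hright ▸ hmono k (n + 1) (by omega) le_rfl⟩

lemma IsCritical.abs_latitudeCurvature_add (hcrit : IsCritical γ n z) (hk : 1 ≤ k) (hkn : k < n) :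
    |latitudeCurvature (z k) + latitudeCurvature (z (k + 1))| =
      4 * |γ| * |pot n z (z (k + 1)) - pot n z (z k)| := by
  obtain ⟨lam, hlam⟩ := hcrit
  have hEL : (-1 : ℝ) ^ (k + 1) * (latitudeCurvature (z k) + latitudeCurvature (z (k + 1))) =
      4 * γ * (pot n z (z (k + 1)) - pot n z (z k)) := by
    have hdiff := (hlam k hk hkn.le).trans (hlam (k + 1) (by omega) hkn).symm
    rw [pow_succ (-1 : ℝ) (k + 1)] at hdiff
    simp only [latitudeCurvature, mul_div_assoc] at hdiff ⊢
    linarith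
  simpa [abs_mul, abs_pow] using congrArg abs hEL

lemma IsCritical.abs_latitudeCurvature_add_le (hcrit : IsCritical γ n z) (hz : IsConfig n z)
    (hk : 1 ≤ k) (hkn : k < n) :
    |latitudeCurvature (z k) + latitudeCurvature (z (k + 1))| ≤
      8 * |γ| * (z (k + 1) - z k) := by
  have hgap : 0 ≤ z (k + 1) - z k := sub_nonneg.2 (hz.lt_succ hkn.le).le
  have hpot := abs_pot_sub_pot_le n z (hz.mem_Ioo hk hkn.le) (hz.mem_Ioo k.succ_pos hkn)
  rw [abs_of_nonneg hgap] at hpot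
  calc |latitudeCurvature (z k) + latitudeCurvature (z (k + 1))|
      = 4 * |γ| * |pot n z (z (k + 1)) - pot n z (z k)| := hcrit.abs_latitudeCurvature_add hk hkn
    _ ≤ 4 * |γ| * ((1 + 1) * (z (k + 1) - z k)) := by
        gcongr
        exact hpot.trans (by gcongr; exact abs_mass_le_one n z)
    _ = 8 * |γ| * (z (k + 1) - z k) := by ring

lemma IsCritical.max_abs_le_mul_sub (hcrit : IsCritical γ n z) (hz : IsConfig n z)
    (hk : 1 ≤ k) (hkn : k < n) :
    max |z k| |z (k + 1)| ≤ max 1 (8 * |γ|) * (z (k + 1) - z k) := by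
  have hgap : 0 < z (k + 1) - z k := sub_pos.2 (hz.lt_succ hkn.le)
  rcases le_total 0 (z k * z (k + 1)) with same_sign | opposite_sign
  · calc max |z k| |z (k + 1)|
        ≤ |latitudeCurvature (z k) + latitudeCurvature (z (k + 1))| :=
          max_abs_le_abs_latitudeCurvature_add (hz.mem_Ioo hk hkn.le) (hz.mem_Ioo k.succ_pos hkn)
            same_sign
      _ ≤ 8 * |γ| * (z (k + 1) - z k) := hcrit.abs_latitudeCurvature_add_le hz hk hkn
      _ ≤ max 1 (8 * |γ|) * (z (k + 1) - z k) := by gcongr; exact le_max_right _ _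
  · calc max |z k| |z (k + 1)|
        = max |z k| |-z (k + 1)| := by rw [abs_neg]
      _ ≤ |z k + -z (k + 1)| := max_abs_le_abs_add (by linarith)
      _ = 1 * (z (k + 1) - z k) := by
        rw [← sub_eq_add_neg, abs_sub_comm, abs_of_pos hgap, one_mul]
      _ ≤ max 1 (8 * |γ|) * (z (k + 1) - z k) := by gcongr; exact le_max_left _ _

end CriticalPoints

theorem interface_distance_lower_bound_general (γ : ℝ) (hγ : 0 < γ) :
    ∃ C > (0 : ℝ), ∀ n : ℕ, ∀ z : ℕ → ℝ, IsConfig n z → IsCritical γ n z →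
      ∀ k, 1 ≤ k → k < n → C * max |z k| |z (k + 1)| / γ ≤ z (k + 1) - z k := by
  have hL : 0 < max 1 (8 * |γ|) := lt_max_of_lt_left one_pos
  refine ⟨γ / max 1 (8 * |γ|), div_pos hγ hL, fun n z hz hcrit k hk hkn => ?_⟩
  calc γ / max 1 (8 * |γ|) * max |z k| |z (k + 1)| / γ
      = max |z k| |z (k + 1)| / max 1 (8 * |γ|) := by field_simp
    _ ≤ z (k + 1) - z k := (div_le_iff₀' hL).2 (hcrit.max_abs_le_mul_sub hz hk hkn)

/-- Remark: lower bound on the interfacial distance.  For every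
`γ > 0` there is a constant `C > 0`, independent of the configuration, such that every
axisymmetric critical point of `E_γ` with mass `m = 0` satisfies
`z_{k+1} − z_k ≥ C·max{|z_k|, |z_{k+1}|}/γ` for all consecutive interfaces. -/
theorem interface_distance_lower_bound (γ : ℝ) (hγ : 0 < γ) :
    ∃ C > (0 : ℝ), ∀ n : ℕ, 1 ≤ n → ∀ z : ℕ → ℝ,
      IsConfig n z → mass n z = 0 → IsCritical γ n z →
      ∀ k, 1 ≤ k → k ≤ n - 1 →
        C * max |z k| |z (k + 1)| / γ ≤ z (k + 1) - z k := by
  obtain ⟨C, hC, hbound⟩ := interface_distance_lower_bound_general γ hγ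
  exact ⟨C, hC, fun n _ z hz _ hcrit k hk hkn => hbound n z hz hcrit k hk (by omega)⟩
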